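/- arXiv:2405.17014 — 9 statements merged into one kernel-verified Lean document; each statement's English description precedes it below -/
import Mathlib

section
/- Let 0 < g_* ≤ g^*, let g : (0,∞) → (0,∞) be differentiable with g_* ≤ 1 + r g′(r)/g(r) ≤ g^* for all r > 0 and with lim_{r→0⁺} r g(r) = 0, and define h : ℝ → ℝ by h(t) = g(|t|) t for t ≠ 0 and h(0) = 0. Then for all ξ ≠ ζ in ℝ, the function r ↦ g(|θ_r|) + |θ_r| g′(|θ_r|), where θ_r = r ξ + (1 − r) ζ, is integrable on [0,1] and h(ξ) − h(ζ) = (ξ − ζ) ∫₀¹ ( g(|θ_r|) + |θ_r| g′(|θ_r|) ) dr. -/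
/-- Mean-value representation for `h(t) = g(|t|) t` (extended by `h(0) = 0`) along the
segment `θ_r = r ξ + (1-r) ζ`: for `ξ ≠ ζ`, the function
`r ↦ g(|θ_r|) + |θ_r| g'(|θ_r|)` is integrable on `[0,1]` and
`h(ξ) - h(ζ) = (ξ - ζ) ∫₀¹ (g(|θ_r|) + |θ_r| g'(|θ_r|)) dr`. -/
theorem mean_value_representation (gs gS : ℝ) (hgs : 0 < gs) (hgsS : gs ≤ gS)
    (g g' : ℝ → ℝ)
    (hgpos : ∀ r : ℝ, 0 < r → 0 < g r)
    (hgderiv : ∀ r : ℝ, 0 < r → HasDerivAt g (g' r) r)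
    (hlow : ∀ r : ℝ, 0 < r → gs ≤ 1 + r * g' r / g r)
    (hupp : ∀ r : ℝ, 0 < r → 1 + r * g' r / g r ≤ gS)
    (hlim : Filter.Tendsto (fun r : ℝ => r * g r) (nhdsWithin 0 (Set.Ioi 0)) (nhds 0))
    (h : ℝ → ℝ) (hh : ∀ t : ℝ, t ≠ 0 → h t = g |t| * t) (hh0 : h 0 = 0)
    (ξ ζ : ℝ) (hne : ξ ≠ ζ) :
    IntervalIntegrable
      (fun r : ℝ => g |r * ξ + (1 - r) * ζ| + |r * ξ + (1 - r) * ζ| * g' |r * ξ + (1 - r) * ζ|)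
      MeasureTheory.volume 0 1 ∧
    h ξ - h ζ = (ξ - ζ) *
      ∫ r in (0:ℝ)..1,
        (g |r * ξ + (1 - r) * ζ| + |r * ξ + (1 - r) * ζ| * g' |r * ξ + (1 - r) * ζ|) := by
  obtain ⟨k, hkdef⟩ : ∃ k : ℝ → ℝ, ∀ t, k t = g |t| + |t| * g' |t| := ⟨_, fun _ => rfl⟩
  have hk : ∀ t : ℝ, t ≠ 0 → 0 ≤ k t := by
    intro t ht
    have hp : 0 < |t| := abs_pos.mpr ht
    have hg := hgpos _ hp
    have h1 := hlow _ hp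
    have : k t = g |t| * (1 + |t| * g' |t| / g |t|) := by
      rw [hkdef]; field_simp
    rw [this]
    exact mul_nonneg hg.le (hgs.le.trans h1)
  have hD : ∀ t : ℝ, t ≠ 0 → HasDerivAt h (k t) t := by
    intro t ht
    have hp : 0 < |t| := abs_pos.mpr ht
    have h1 := ((hgderiv _ hp).comp t (hasDerivAt_abs ht)).mul (hasDerivAt_id t)
    have h2 : HasDerivAt (fun x => g |x| * x) (k t) t := by
      refine HasDerivAt.congr_deriv h1 ?_
      have := sign_mul_self t
      simp only [id, Function.comp, hkdef]
      rw [mul_assoc, this]; ring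
    refine h2.congr_of_eventuallyEq ?_
    filter_upwards [isOpen_ne.mem_nhds ht] with x hx
    exact hh x hx
  have hc : Continuous h := by
    rw [continuous_iff_continuousAt]
    intro t
    by_cases ht : t = 0
    · subst ht
      rw [continuousAt_iff_punctured_nhds, hh0]
      have habs : Filter.Tendsto (fun t : ℝ => |t|) (nhdsWithin 0 {0}ᶜ)
          (nhdsWithin 0 (Set.Ioi 0)) := tendsto_norm_nhdsNE_zero
      refine squeeze_zero_norm' ?_ (hlim.comp habs)
      filter_upwards [self_mem_nhdsWithin] with x hx
      have hx' : x ≠ 0 := hx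
      rw [hh x hx', Real.norm_eq_abs, abs_mul, abs_of_pos (hgpos _ (abs_pos.mpr hx'))]
      simp [mul_comm]
    · exact (hD t ht).continuousAt
  have hI0 : ∀ b : ℝ, IntervalIntegrable k MeasureTheory.volume 0 b := by
    intro b
    have hne0 : ∀ x ∈ Set.Ioo (min 0 b) (max 0 b), x ≠ 0 := by
      rintro x ⟨h1, h2⟩ rfl
      simp at h1 h2
      linarith
    exact intervalIntegral.intervalIntegrable_deriv_of_nonneg hc.continuousOn
      (fun x hx => hD x (hne0 x hx)) (fun x hx => hk x (hne0 x hx))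
  have hI : IntervalIntegrable k MeasureTheory.volume ζ ξ := (hI0 ζ).symm.trans (hI0 ξ)
  have hF : ∫ x in ζ..ξ, k x = h ξ - h ζ :=
    MeasureTheory.integral_eq_of_hasDerivAt_off_countable h k (Set.countable_singleton 0)
      hc.continuousOn (fun x hx => hD x hx.2) hI
  have hd : ξ - ζ ≠ 0 := sub_ne_zero.mpr hne
  have hfun : (fun r : ℝ => g |r * ξ + (1 - r) * ζ| +
      |r * ξ + (1 - r) * ζ| * g' |r * ξ + (1 - r) * ζ|) = fun r => k ((ξ - ζ) * r + ζ) := by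
    funext r
    rw [hkdef, show (ξ - ζ) * r + ζ = r * ξ + (1 - r) * ζ by ring]
  rw [hfun]
  constructor
  · have h1 := (hI.comp_add_right ζ).comp_mul_left (c := ξ - ζ)
    simpa [div_self hd] using h1
  · rw [intervalIntegral.integral_comp_mul_add k hd ζ]
    simp only [mul_zero, zero_add, mul_one, sub_add_cancel, smul_eq_mul]
    rw [hF]
    field_simp
end

section
/- Let 0 < g_* ≤ g^*, let g : (0,∞) → (0,∞) be differentiable with g_* ≤ 1 + r g′(r)/g(r) ≤ g^* for all r > 0 and with lim_{r→0⁺} r g(r) = 0, and define h : ℝ → ℝ by h(t) = g(|t|) t for t ≠ 0 and h(0) = 0. Then h is strictly increasing on ℝ; equivalently, for all ξ, ζ ∈ ℝ with ξ ≠ ζ one has (h(ξ) − h(ζ)) · (ξ − ζ) > 0. -/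
/-- For `g` satisfying the structural growth condition with `lim_{r→0⁺} r g(r) = 0`,
the function `h(t) = g(|t|) t` (extended by `h(0) = 0`) is strictly increasing on `ℝ`;
equivalently, `(h(ξ) - h(ζ))(ξ - ζ) > 0` for all `ξ ≠ ζ`. -/
theorem h_strict_monotone (gs gS : ℝ) (hgs : 0 < gs) (hgsS : gs ≤ gS)
    (g g' : ℝ → ℝ)
    (hgpos : ∀ r : ℝ, 0 < r → 0 < g r)
    (hgderiv : ∀ r : ℝ, 0 < r → HasDerivAt g (g' r) r)
    (hlow : ∀ r : ℝ, 0 < r → gs ≤ 1 + r * g' r / g r)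
    (hupp : ∀ r : ℝ, 0 < r → 1 + r * g' r / g r ≤ gS)
    (hlim : Filter.Tendsto (fun r : ℝ => r * g r) (nhdsWithin 0 (Set.Ioi 0)) (nhds 0))
    (h : ℝ → ℝ) (hh : ∀ t : ℝ, t ≠ 0 → h t = g |t| * t) (hh0 : h 0 = 0) :
    StrictMono h ∧ ∀ ξ ζ : ℝ, ξ ≠ ζ → 0 < (h ξ - h ζ) * (ξ - ζ) := by
  have hd : ∀ r : ℝ, 0 < r → HasDerivAt (fun r => g r * r) (g' r * r + g r * 1) r :=
    fun r hr => (hgderiv r hr).mul (hasDerivAt_id r)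
  have hpos : ∀ r : ℝ, 0 < r → 0 < g' r * r + g r * 1 := by
    intro r hr
    have h1 := hgpos r hr
    have h2 : 0 < (1 + r * g' r / g r) * g r := mul_pos (lt_of_lt_of_le hgs (hlow r hr)) h1
    have h3 : (1 + r * g' r / g r) * g r = g' r * r + g r * 1 := by
      field_simp
      ring
    linarith
  have hm : StrictMonoOn (fun r => g r * r) (Set.Ioi 0) := by
    apply strictMonoOn_of_deriv_pos (convex_Ioi 0)
    · intro r hr
      exact (hd r hr).continuousAt.continuousWithinAt
    · intro r hr
      rw [interior_Ioi] at hr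
      rw [(hd r hr).deriv]
      exact hpos r hr
  have hp : ∀ t : ℝ, 0 < t → h t = g t * t := by
    intro t ht
    rw [hh t ht.ne', abs_of_pos ht]
  have hn : ∀ t : ℝ, t < 0 → h t = -(g (-t) * (-t)) := by
    intro t ht
    rw [hh t ht.ne, abs_of_neg ht]
    ring
  have hpp : ∀ t : ℝ, 0 < t → 0 < h t := by
    intro t ht
    rw [hp t ht]
    exact mul_pos (hgpos t ht) ht
  have hnn : ∀ t : ℝ, t < 0 → h t < 0 := by
    intro t ht
    rw [hn t ht]
    have := mul_pos (hgpos (-t) (by linarith)) (show 0 < -t by linarith)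
    linarith
  have hs : StrictMono h := by
    intro a b hab
    rcases lt_trichotomy a 0 with ha | ha | ha
    · rcases lt_trichotomy b 0 with hb | hb | hb
      · have := hm (show -b ∈ Set.Ioi (0:ℝ) from neg_pos.2 hb)
          (show -a ∈ Set.Ioi (0:ℝ) from neg_pos.2 ha) (neg_lt_neg hab)
        rw [hn a ha, hn b hb]
        exact neg_lt_neg this
      · rw [hb, hh0]
        exact hnn a ha
      · exact (hnn a ha).trans (hpp b hb)
    · rw [ha, hh0]
      exact hpp b (ha ▸ hab)
    · have hb := ha.trans hab
      rw [hp a ha, hp b hb]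
      exact hm ha hb hab
  refine ⟨hs, fun ξ ζ hne => ?_⟩
  rcases lt_or_gt_of_ne hne with hl | hl
  · exact mul_pos_of_neg_of_neg (sub_neg.2 (hs hl)) (sub_neg.2 hl)
  · exact mul_pos (sub_pos.2 (hs hl)) (sub_pos.2 hl)
end

section
/- Let 0 < g_* ≤ g^* and 0 < γ_* ≤ γ^*, and let g : (0,∞) → (0,∞) be differentiable with g_* ≤ 1 + r g′(r)/g(r) ≤ g^* and γ_* ≤ g(r) ≤ γ^* for all r > 0, and define h : ℝ → ℝ by h(t) = g(|t|) t for t ≠ 0 and h(0) = 0. Then for all ξ, ζ ∈ ℝ one has |h(ξ) − h(ζ)| ≤ γ^* g^* |ξ − ζ|. -/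
/-- In the Hilbertian case `0 < γ_* ≤ g(r) ≤ γ^*`, the function `h(t) = g(|t|) t`
(extended by `h(0) = 0`) satisfies the pointwise Lipschitz bound
`|h(ξ) - h(ζ)| ≤ γ^* g^* |ξ - ζ|` for all `ξ, ζ ∈ ℝ`. -/
theorem h_lipschitz (gs gS γs γS : ℝ) (hgs : 0 < gs) (hgsS : gs ≤ gS)
    (hγs : 0 < γs) (hγsS : γs ≤ γS)
    (g g' : ℝ → ℝ)
    (hgderiv : ∀ r : ℝ, 0 < r → HasDerivAt g (g' r) r)
    (hlow : ∀ r : ℝ, 0 < r → gs ≤ 1 + r * g' r / g r)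
    (hupp : ∀ r : ℝ, 0 < r → 1 + r * g' r / g r ≤ gS)
    (hbdd : ∀ r : ℝ, 0 < r → γs ≤ g r ∧ g r ≤ γS)
    (h : ℝ → ℝ) (hh : ∀ t : ℝ, t ≠ 0 → h t = g |t| * t) (hh0 : h 0 = 0) :
    ∀ ξ ζ : ℝ, |h ξ - h ζ| ≤ γS * gS * |ξ - ζ| := by
  have hF : ∀ t : ℝ, 0 ≤ t → h t = g t * t := by
    intro t ht
    rcases ht.eq_or_lt with rfl | ht
    · simp [hh0]
    · rw [hh t ht.ne', abs_of_pos ht]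
  have hodd : ∀ t : ℝ, h (-t) = -h t := by
    intro t
    by_cases ht : t = 0
    · simp [ht, hh0]
    · rw [hh _ (neg_ne_zero.mpr ht), hh t ht, abs_neg]; ring
  have hder : ∀ t : ℝ, 0 < t → HasDerivAt (fun x => g x * x) (g' t * t + g t * 1) t :=
    fun t ht => (hgderiv t ht).mul (hasDerivAt_id t)
  have hcont : ∀ a b : ℝ, 0 ≤ a → ContinuousOn h (Set.Icc a b) := by
    intro a b ha
    have hc : ContinuousOn h (Set.Ici 0) := by
      intro t ht
      rcases (Set.mem_Ici.mp ht).eq_or_lt with rfl | ht'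
      · apply ContinuousAt.continuousWithinAt
        have hb : ∀ x, ‖h x‖ ≤ γS * |x| := by
          intro x
          by_cases hx : x = 0
          · simp [hx, hh0]
          · have h1 := hbdd |x| (abs_pos.mpr hx)
            rw [hh x hx, Real.norm_eq_abs, abs_mul, abs_of_nonneg (by linarith : 0 ≤ g |x|)]
            exact mul_le_mul_of_nonneg_right h1.2 (abs_nonneg x)
        unfold ContinuousAt
        rw [hh0]
        apply squeeze_zero_norm hb
        have : Continuous (fun x : ℝ => γS * |x|) := by fun_prop
        simpa using this.tendsto 0
      · exact ((hder t ht').continuousAt.continuousWithinAt).congr (fun y hy => hF y hy) (hF t ht)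
    exact hc.mono (fun x hx => ha.trans hx.1)
  have key : ∀ a b : ℝ, 0 ≤ a → a ≤ b → |h b - h a| ≤ γS * gS * (b - a) := by
    intro a b ha hab
    rcases hab.eq_or_lt with rfl | hab
    · simp
    have hd : ∀ x ∈ Set.Ioo a b, HasDerivAt h (g' x * x + g x * 1) x := by
      intro x hx
      have hx0 : 0 < x := ha.trans_lt hx.1
      apply (hder x hx0).congr_of_eventuallyEq
      filter_upwards [lt_mem_nhds hx0] with y hy using hF y hy.le
    obtain ⟨c, hc, hce⟩ := exists_hasDerivAt_eq_slope h _ hab (hcont a b ha) hd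
    have hc0 : 0 < c := ha.trans_lt hc.1
    have hba : 0 < b - a := sub_pos.mpr hab
    have hg := hbdd c hc0
    have hgp : 0 < g c := hγs.trans_le hg.1
    have e : g' c * c + g c * 1 = g c * (1 + c * g' c / g c) := by field_simp; ring
    rw [e, eq_div_iff hba.ne'] at hce
    have l := hlow c hc0
    have u := hupp c hc0
    have hp : 0 ≤ g c * (1 + c * g' c / g c) := mul_nonneg hgp.le (by linarith)
    rw [← hce, abs_of_nonneg (mul_nonneg hp hba.le)]
    exact mul_le_mul_of_nonneg_right
      (mul_le_mul hg.2 u (by linarith) (by linarith)) hba.le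
  have key2 : ∀ a b : ℝ, a ≤ b → |h b - h a| ≤ γS * gS * (b - a) := by
    intro a b hab
    rcases le_total 0 a with ha | ha
    · exact key a b ha hab
    rcases le_total 0 b with hb | hb
    · have h1 := key 0 b le_rfl hb
      have h2 := key 0 (-a) le_rfl (by linarith)
      rw [hodd, hh0] at h2
      rw [hh0] at h1
      rw [abs_le] at *
      constructor <;> linarith [h1.1, h1.2, h2.1, h2.2]
    · have h2 := key (-b) (-a) (by linarith) (by linarith)
      rw [hodd, hodd] at h2
      rw [abs_le] at *
      constructor <;> linarith [h2.1, h2.2]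
  intro ξ ζ
  rcases le_total ζ ξ with hle | hle
  · rw [abs_of_nonneg (sub_nonneg.mpr hle)]
    exact key2 ζ ξ hle
  · rw [abs_sub_comm, abs_sub_comm ξ, abs_of_nonneg (sub_nonneg.mpr hle)]
    exact key2 ξ ζ hle
end

section
/- Let d ≥ 1, 0 < s < 1, let Ω ⊂ ℝ^d be a bounded measurable set, and let g : ℝ^d × ℝ^d × (0,∞) → (0,∞) be jointly measurable such that for almost every (x,y) the map r ↦ g(x,y,r) is differentiable with g_* ≤ 1 + r ∂_r g(x,y,r)/g(x,y,r) ≤ g^* for all r > 0 (with 0 < g_* ≤ g^*) and lim_{r→0⁺} r g(x,y,r) = 0; set h(x,y,t) = g(x,y,|t|) t for t ≠ 0 and h(x,y,0) = 0. Let u, v : ℝ^d → ℝ be measurable with u = v = 0 a.e. on ℝ^d ∖ Ω and set w = u − v, w⁺ = max(w, 0). Then the integrand (x,y) ↦ [ h(x,y, δ^s u(x,y)) − h(x,y, δ^s v(x,y)) ] · δ^s w⁺(x,y) · |x − y|^{−d} is nonnegative for a.e. (x,y), so the double integral ⟨𝓛_g^s u − 𝓛_g^s v, w⁺⟩ = ∫_{ℝ^d}∫_{ℝ^d}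 [ h(x,y, δ^s u) − h(x,y, δ^s v) ] δ^s w⁺ |x − y|^{−d} dx dy ∈ [0, ∞] is well defined and nonnegative; moreover, if w⁺ is not equal to 0 almost everywhere, then this integral is strictly positive. -/
open MeasureTheory

/-- Euclidean space `ℝ^d`. -/
abbrev Ed (d : ℕ) : Type := EuclideanSpace ℝ (Fin d)

/-- The fractional difference quotient `δ^s u(x,y) = (u(x) - u(y))/|x-y|^s`. -/
noncomputable def deltaS {d : ℕ} (s : ℝ) (u : Ed d → ℝ) (x y : Ed d) : ℝ :=
  (u x - u y) / ‖x - y‖ ^ s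

theorem aux_strictMono (gs : ℝ) (hgs : 0 < gs) (G G' H : ℝ → ℝ)
    (hG : ∀ r : ℝ, 0 < r → 0 < G r ∧ HasDerivAt G (G' r) r ∧ gs ≤ 1 + r * G' r / G r)
    (hH : ∀ t : ℝ, t ≠ 0 → H t = G |t| * t) (hH0 : H 0 = 0) : StrictMono H := by
  have hd : ∀ r : ℝ, 0 < r → HasDerivAt (fun r => G r * r) (G' r * r + G r * 1) r := by
    intro r hr
    exact (hG r hr).2.1.mul (hasDerivAt_id r)
  have hk : StrictMonoOn (fun r => G r * r) (Set.Ioi 0) := by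
    apply strictMonoOn_of_deriv_pos (convex_Ioi 0)
    · intro r hr
      exact (hd r hr).continuousAt.continuousWithinAt
    · intro r hr
      rw [interior_Ioi] at hr
      have hr : 0 < r := hr
      rw [(hd r hr).deriv]
      obtain ⟨h1, -, h3⟩ := hG r hr
      have : G' r * r + G r * 1 = G r * (1 + r * G' r / G r) := by
        field_simp
        ring
      rw [this]
      exact mul_pos h1 (lt_of_lt_of_le hgs h3)
  have hpos : ∀ t : ℝ, 0 < t → H t = G t * t := by
    intro t ht
    rw [hH t ht.ne', abs_of_pos ht]
  have hneg : ∀ t : ℝ, t < 0 → H t = - (G (-t) * (-t)) := by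
    intro t ht
    rw [hH t ht.ne, abs_of_neg ht]
    ring
  have hp0 : ∀ t : ℝ, 0 < t → 0 < G t * t := fun t ht => mul_pos (hG t ht).1 ht
  intro a b hab
  rcases lt_trichotomy a 0 with ha | ha | ha
  · have h1 := hp0 (-a) (by linarith)
    rw [hneg a ha]
    rcases lt_trichotomy b 0 with hb | hb | hb
    · rw [hneg b hb]
      have := hk (show -b ∈ Set.Ioi (0:ℝ) from by simpa using hb)
        (show -a ∈ Set.Ioi (0:ℝ) from by simpa using ha) (by linarith)
      simp only at this
      linarith
    · rw [hb, hH0]; linarith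
    · rw [hpos b hb]
      have := hp0 b hb
      linarith
  · subst ha
    rw [hH0, hpos b hab]
    exact hp0 b hab
  · rw [hpos a ha, hpos b (ha.trans hab)]
    exact hk ha (ha.trans hab) hab

theorem aux_sub {d : ℕ} (s : ℝ) (u v : Ed d → ℝ) (x y : Ed d) :
    deltaS s u x y - deltaS s v x y = ((u x - v x) - (u y - v y)) / ‖x - y‖ ^ s := by
  unfold deltaS
  rw [← sub_div]
  congr 1
  ring

theorem aux_nonneg {d : ℕ} (s : ℝ) (u v : Ed d → ℝ) (x y : Ed d) (H : ℝ → ℝ)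
    (hH : StrictMono H) :
    0 ≤ (H (deltaS s u x y) - H (deltaS s v x y)) *
        deltaS s (fun z => max (u z - v z) 0) x y / ‖x - y‖ ^ (d : ℝ) := by
  have hN : 0 ≤ ‖x - y‖ ^ s := by positivity
  have hM : 0 ≤ ‖x - y‖ ^ (d : ℝ) := by positivity
  have hs := aux_sub s u v x y
  apply div_nonneg _ hM
  rcases le_total (u x - v x) (u y - v y) with hc | hc
  · apply mul_nonneg_of_nonpos_of_nonpos
    · have : deltaS s u x y - deltaS s v x y ≤ 0 := by
        rw [hs]; exact div_nonpos_of_nonpos_of_nonneg (by linarith) hN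
      have := hH.monotone (sub_nonpos.1 this)
      linarith
    · apply div_nonpos_of_nonpos_of_nonneg _ hN
      have := max_le_max_right 0 hc
      linarith
  · apply mul_nonneg
    · have : 0 ≤ deltaS s u x y - deltaS s v x y := by
        rw [hs]; exact div_nonneg (by linarith) hN
      have := hH.monotone (sub_nonneg.1 this)
      linarith
    · apply div_nonneg _ hN
      have := max_le_max_right 0 hc
      linarith

theorem aux_pos {d : ℕ} (s : ℝ) (u v : Ed d → ℝ) (x y : Ed d) (H : ℝ → ℝ)
    (hH : StrictMono H) (hx : 0 < u x - v x) (hy : u y - v y ≤ 0) :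
    0 < (H (deltaS s u x y) - H (deltaS s v x y)) *
        deltaS s (fun z => max (u z - v z) 0) x y / ‖x - y‖ ^ (d : ℝ) := by
  have hne : x ≠ y := by
    rintro rfl
    linarith
  have h0 : 0 < ‖x - y‖ := norm_pos_iff.2 (sub_ne_zero.2 hne)
  have hN : 0 < ‖x - y‖ ^ s := by positivity
  have hM : 0 < ‖x - y‖ ^ (d : ℝ) := by positivity
  have hs := aux_sub s u v x y
  apply div_pos _ hM
  apply mul_pos
  · have : 0 < deltaS s u x y - deltaS s v x y := by
      rw [hs]; exact div_pos (by linarith) hN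
    have := hH (sub_pos.1 this)
    linarith
  · apply div_pos _ hN
    simp only [max_eq_left hx.le, max_eq_right hy]
    linarith

theorem aux_meas {d : ℕ} (s : ℝ) (u : Ed d → ℝ) (hu : Measurable u) :
    Measurable (fun p : Ed d × Ed d => deltaS s u p.1 p.2) := by
  unfold deltaS
  fun_prop

/-- Strict T-monotonicity of the nonlocal nonlinear anisotropic g-Laplacian: with
`h(x,y,t) = g(x,y,|t|) t` (extended by `0` at `t = 0`) and `w⁺ = (u - v)⁺`, the integrand
`(h(x,y,δ^s u) - h(x,y,δ^s v)) δ^s w⁺ |x-y|^{-d}` is a.e. nonnegative, so the double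
integral `⟨𝓛_g^s u - 𝓛_g^s v, w⁺⟩ ∈ [0,∞]` is well defined and nonnegative; moreover it is
strictly positive when `w⁺` is not a.e. zero. -/
theorem strict_T_monotonicity
    (d : ℕ) (hd : 1 ≤ d) (s : ℝ) (hs0 : 0 < s) (hs1 : s < 1)
    (gs gS : ℝ) (hgs : 0 < gs) (hgsS : gs ≤ gS)
    (Ω : Set (Ed d)) (hΩm : MeasurableSet Ω) (hΩb : Bornology.IsBounded Ω)
    (g g' : Ed d → Ed d → ℝ → ℝ)
    (hgmeas : Measurable (fun p : Ed d × Ed d × ℝ => g p.1 p.2.1 p.2.2))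
    (hgae : ∀ᵐ p : Ed d × Ed d,
      (∀ r : ℝ, 0 < r → 0 < g p.1 p.2 r ∧ HasDerivAt (g p.1 p.2) (g' p.1 p.2 r) r ∧
        gs ≤ 1 + r * g' p.1 p.2 r / g p.1 p.2 r ∧ 1 + r * g' p.1 p.2 r / g p.1 p.2 r ≤ gS) ∧
      Filter.Tendsto (fun r : ℝ => r * g p.1 p.2 r) (nhdsWithin 0 (Set.Ioi 0)) (nhds 0))
    (h : Ed d → Ed d → ℝ → ℝ)
    (hh : ∀ (x y : Ed d) (t : ℝ), t ≠ 0 → h x y t = g x y |t| * t)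
    (hh0 : ∀ x y : Ed d, h x y 0 = 0)
    (u v : Ed d → ℝ) (hu : Measurable u) (hv : Measurable v)
    (hu0 : ∀ᵐ x : Ed d, x ∉ Ω → u x = 0)
    (hv0 : ∀ᵐ x : Ed d, x ∉ Ω → v x = 0) :
    (∀ᵐ p : Ed d × Ed d,
      0 ≤ (h p.1 p.2 (deltaS s u p.1 p.2) - h p.1 p.2 (deltaS s v p.1 p.2)) *
        deltaS s (fun z => max (u z - v z) 0) p.1 p.2 / ‖p.1 - p.2‖ ^ (d : ℝ)) ∧
    (¬ ((fun z => max (u z - v z) 0) =ᵐ[volume] (fun _ => (0 : ℝ))) →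
      0 < ∫⁻ p : Ed d × Ed d,
        ENNReal.ofReal ((h p.1 p.2 (deltaS s u p.1 p.2) - h p.1 p.2 (deltaS s v p.1 p.2)) *
          deltaS s (fun z => max (u z - v z) 0) p.1 p.2 / ‖p.1 - p.2‖ ^ (d : ℝ))) := by
  have hmono : ∀ᵐ p : Ed d × Ed d, StrictMono (h p.1 p.2) := by
    filter_upwards [hgae] with p hp
    exact aux_strictMono gs hgs (g p.1 p.2) (g' p.1 p.2) (h p.1 p.2)
      (fun r hr => ⟨(hp.1 r hr).1, (hp.1 r hr).2.1, (hp.1 r hr).2.2.1⟩)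
      (hh p.1 p.2) (hh0 p.1 p.2)
  refine ⟨?_, ?_⟩
  · filter_upwards [hmono] with p hp
    exact aux_nonneg s u v p.1 p.2 _ hp
  intro hw
  have hheq : (fun q : Ed d × Ed d × ℝ => h q.1 q.2.1 q.2.2) =
      fun q => g q.1 q.2.1 |q.2.2| * q.2.2 := by
    funext q
    by_cases hq : q.2.2 = 0
    · rw [hq, hh0, mul_zero]
    · exact hh _ _ _ hq
  have hhm : Measurable (fun q : Ed d × Ed d × ℝ => h q.1 q.2.1 q.2.2) := by
    rw [hheq]
    have habs : Measurable (fun q : Ed d × Ed d × ℝ => ((q.1, q.2.1, |q.2.2|) : Ed d × Ed d × ℝ)) := by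
      fun_prop
    exact (hgmeas.comp habs).mul (by fun_prop)
  have hcomp : ∀ f : Ed d → ℝ, Measurable f →
      Measurable (fun p : Ed d × Ed d => h p.1 p.2 (deltaS s f p.1 p.2)) := by
    intro f hf
    exact hhm.comp (measurable_fst.prodMk (measurable_snd.prodMk (aux_meas s f hf)))
  have hFm : Measurable (fun p : Ed d × Ed d =>
      ENNReal.ofReal ((h p.1 p.2 (deltaS s u p.1 p.2) - h p.1 p.2 (deltaS s v p.1 p.2)) *
          deltaS s (fun z => max (u z - v z) 0) p.1 p.2 / ‖p.1 - p.2‖ ^ (d : ℝ))) := by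
    apply Measurable.ennreal_ofReal
    apply Measurable.div
    · exact ((hcomp u hu).sub (hcomp v hv)).mul (aux_meas s _ ((hu.sub hv).max measurable_const))
    · fun_prop
  rw [pos_iff_ne_zero]
  intro hzero
  rw [lintegral_eq_zero_iff hFm] at hzero
  have hAB : (volume : Measure (Ed d × Ed d))
      ({x | 0 < u x - v x} ×ˢ {y | u y - v y ≤ 0}) = 0 := by
    have : ∀ᵐ p : Ed d × Ed d, p ∉ ({x | 0 < u x - v x} ×ˢ {y | u y - v y ≤ 0} : Set (Ed d × Ed d)) := by
      filter_upwards [hzero, hmono] with p hp hm hmem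
      have h1 := aux_pos s u v p.1 p.2 _ hm hmem.1 hmem.2
      have h2 := ENNReal.ofReal_pos.2 h1
      exact h2.ne' hp
    exact measure_eq_zero_iff_ae_notMem.2 this
  rw [Measure.volume_eq_prod, Measure.prod_prod, mul_eq_zero] at hAB
  rcases hAB with hA | hB
  · apply hw
    have : ∀ᵐ x : Ed d, ¬ (0 < u x - v x) := by
      rw [ae_iff]; simpa using hA
    filter_upwards [this] with x hx
    exact max_eq_right (not_lt.1 hx)
  · have h1 : ∀ᵐ x : Ed d, x ∈ Ω := by
      have : ∀ᵐ x : Ed d, ¬ (u x - v x ≤ 0) := by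
        rw [ae_iff]; simpa using hB
      filter_upwards [this, hu0, hv0] with x hx hux hvx
      by_contra hc
      rw [hux hc, hvx hc] at hx
      simp at hx
    have h2 : volume Ω = volume (Set.univ : Set (Ed d)) :=
      measure_congr (by filter_upwards [h1] with x hx; exact propext ⟨fun _ => trivial, fun _ => hx⟩)
    haveI : Nonempty (Fin d) := ⟨⟨0, hd⟩⟩
    have h3 : volume (Set.univ : Set (Ed d)) = ⊤ := measure_univ_of_isAddLeftInvariant _
    have h4 := hΩb.measure_lt_top (μ := volume)
    rw [h2, h3] at h4
    exact lt_irrefl _ h4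
end

section
/- Let d ≥ 1, 0 < s < 1, 0 < g_* ≤ g^*, and let G : ℝ^d × ℝ^d × [0,∞) → [0,∞) be jointly measurable with G(x,y,0) = 0 such that for almost every (x,y) the map r ↦ G(x,y,r) is differentiable on (0,∞) with nondecreasing derivative ḡ(x,y,·) ≥ 0 satisfying (1 + g_*) G(x,y,r) ≤ r ḡ(x,y,r) ≤ (1 + g^*) G(x,y,r) for all r > 0. Let Ψ : ℝ → ℝ be Lipschitz with constant λ > 0 and Ψ(0) = 0, and let v : ℝ^d → ℝ be measurable. Then, as (possibly infinite) integrals of nonnegative functions, ∫_{ℝ^d}∫_{ℝ^d} G(x,y, |Ψ(v(x)) − Ψ(v(y))| / |x−y|^s) |x−y|^{−d} dx dy ≤ (g^* + 1)/(g_* + 1) · ∫_{ℝ^d}∫_{ℝ^d} G(x,y, λ |v(x) − v(y)| / |x−y|^s) |x−y|^{−d} dx dy. -/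
open MeasureTheory

/-- Modular estimate for Lipschitz compositions: if `Ψ` is Lipschitz with constant `λ > 0`
and `Ψ(0) = 0`, then
`Γ_{s,G}(Ψ ∘ v) ≤ (g^*+1)/(g_*+1) · Γ_{s,G}(λ v)` as integrals of nonnegative functions,
where `Γ_{s,G}(w) = ∫∫ G(x, y, |w(x)-w(y)|/|x-y|^s) |x-y|^{-d} dx dy`. -/
theorem lipschitz_composition_modular
    (d : ℕ) (hd : 1 ≤ d) (s : ℝ) (hs0 : 0 < s) (hs1 : s < 1)
    (gs gS : ℝ) (hgs : 0 < gs) (hgsS : gs ≤ gS)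
    (G gbar : Ed d → Ed d → ℝ → ℝ)
    (hGmeas : Measurable (fun p : Ed d × Ed d × ℝ => G p.1 p.2.1 p.2.2))
    (hG0 : ∀ x y : Ed d, G x y 0 = 0)
    (hGae : ∀ᵐ p : Ed d × Ed d,
      (∀ r : ℝ, 0 < r → HasDerivAt (G p.1 p.2) (gbar p.1 p.2 r) r ∧ 0 ≤ gbar p.1 p.2 r ∧
        (1 + gs) * G p.1 p.2 r ≤ r * gbar p.1 p.2 r ∧
        r * gbar p.1 p.2 r ≤ (1 + gS) * G p.1 p.2 r) ∧
      MonotoneOn (gbar p.1 p.2) (Set.Ioi 0))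
    (Ψ : ℝ → ℝ) (lam : ℝ) (hlam : 0 < lam)
    (hΨ : ∀ a b : ℝ, |Ψ a - Ψ b| ≤ lam * |a - b|) (hΨ0 : Ψ 0 = 0)
    (v : Ed d → ℝ) (hv : Measurable v) :
    (∫⁻ p : Ed d × Ed d,
        ENNReal.ofReal (G p.1 p.2 (|Ψ (v p.1) - Ψ (v p.2)| / ‖p.1 - p.2‖ ^ s) /
          ‖p.1 - p.2‖ ^ (d : ℝ))) ≤
      ENNReal.ofReal ((gS + 1) / (gs + 1)) *
        ∫⁻ p : Ed d × Ed d,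
          ENNReal.ofReal (G p.1 p.2 (lam * |v p.1 - v p.2| / ‖p.1 - p.2‖ ^ s) /
            ‖p.1 - p.2‖ ^ (d : ℝ)) := by
  have hC : (1 : ENNReal) ≤ ENNReal.ofReal ((gS + 1) / (gs + 1)) := by
    rw [ENNReal.one_le_ofReal, le_div_iff₀ (by linarith)]
    linarith
  refine le_trans (lintegral_mono_ae ?_) (le_mul_of_one_le_left zero_le hC)
  filter_upwards [hGae] with p hp
  obtain ⟨h, -⟩ := hp
  have hpos : ∀ r : ℝ, 0 < r → 0 ≤ G p.1 p.2 r := by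
    intro r hr
    obtain ⟨-, h1, -, h3⟩ := h r hr
    have h4 : 0 ≤ (1 + gS) * G p.1 p.2 r := le_trans (mul_nonneg hr.le h1) h3
    exact nonneg_of_mul_nonneg_right h4 (by linarith)
  have hmono : MonotoneOn (G p.1 p.2) (Set.Ioi 0) := by
    refine monotoneOn_of_deriv_nonneg (convex_Ioi 0) ?_ ?_ ?_
    · intro r hr
      exact (h r hr).1.continuousAt.continuousWithinAt
    · intro r hr
      rw [interior_Ioi] at hr
      exact (h r hr).1.differentiableAt.differentiableWithinAt
    · intro r hr
      rw [interior_Ioi] at hr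
      rw [(h r hr).1.deriv]
      exact (h r hr).2.1
  have key : ∀ a b : ℝ, 0 ≤ a → a ≤ b → G p.1 p.2 a ≤ G p.1 p.2 b := by
    intro a b ha hab
    rcases ha.eq_or_lt with rfl | ha'
    · rw [hG0]
      rcases hab.eq_or_lt with rfl | hb
      · rw [hG0]
      · exact hpos b hb
    · exact hmono ha' (lt_of_lt_of_le ha' hab) hab
  apply ENNReal.ofReal_le_ofReal
  apply div_le_div_of_nonneg_right _ (by positivity)
  apply key _ _ (by positivity)
  exact div_le_div_of_nonneg_right (hΨ _ _) (by positivity)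
end

section
/- Let d ≥ 1, 0 < s < 1, 0 < g_* ≤ g^*, and let G : ℝ^d × ℝ^d × [0,∞) → [0,∞) be jointly measurable with G(x,y,0) = 0 such that for almost every (x,y) the map r ↦ G(x,y,r) is differentiable on (0,∞) with nondecreasing derivative ḡ(x,y,r) = g(x,y,r)·r ≥ 0 satisfying (1 + g_*) G(x,y,r) ≤ r ḡ(x,y,r) ≤ (1 + g^*) G(x,y,r) for all r > 0. Let v : ℝ^d → ℝ be measurable and k ≥ 0. Then the integrand (x,y) ↦ g(x,y, |δ^s v(x,y)|) · δ^s v(x,y) · δ^s (P_k ∘ v)(x,y) · |x−y|^{−d} is nonnegative a.e., and, as (possibly infinite) integrals of nonnegative functions, (g_* + 1) · ∫_{ℝ^d}∫_{ℝ^d} G(x,y, |δ^s (P_k ∘ v)(x,y)|) |x−y|^{−d} dx dy ≤ ∫_{ℝ^d}∫_{ℝ^d} g(x,y, |δ^s v(x,y)|) δ^s v(x,y) δ^s (P_k ∘ v)(x,y) |x−y|^{−d} dx dy. -/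
open MeasureTheory

/-- The truncation at level `k`: `T_k(t) = max(-k, min(k, t))`. -/
noncomputable def Tk (k t : ℝ) : ℝ := max (-k) (min k t)

/-- The complement of the truncation: `P_k(t) = t - T_k(t)`. -/
noncomputable def Pk (k t : ℝ) : ℝ := t - Tk k t

theorem Pk_diff (k : ℝ) (hk : 0 ≤ k) (u w : ℝ) :
    0 ≤ (u - w) * (Pk k u - Pk k w) ∧ |Pk k u - Pk k w| ≤ |u - w| := by
  have key : ∀ u w : ℝ, w ≤ u → 0 ≤ Pk k u - Pk k w ∧ Pk k u - Pk k w ≤ u - w := by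
    intro u w h
    unfold Pk Tk
    constructor <;> grind
  rcases le_total w u with h | h
  · obtain ⟨h1, h2⟩ := key u w h
    refine ⟨mul_nonneg (by linarith) h1, ?_⟩
    rw [abs_of_nonneg h1, abs_of_nonneg (by linarith)]
    exact h2
  · obtain ⟨h1, h2⟩ := key w u h
    refine ⟨mul_nonneg_of_nonpos_of_nonpos (by linarith) (by linarith), ?_⟩
    rw [abs_of_nonpos (by linarith), abs_of_nonpos (by linarith)]
    linarith

theorem deltaS_Pk {d : ℕ} (s k : ℝ) (hk : 0 ≤ k) (v : Ed d → ℝ) (x y : Ed d) :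
    0 ≤ deltaS s v x y * deltaS s (fun z => Pk k (v z)) x y ∧
      |deltaS s (fun z => Pk k (v z)) x y| ≤ |deltaS s v x y| := by
  obtain ⟨h1, h2⟩ := Pk_diff k hk (v x) (v y)
  have hn : 0 ≤ ‖x - y‖ ^ s := Real.rpow_nonneg (norm_nonneg _) _
  unfold deltaS
  constructor
  · rw [div_mul_div_comm]
    exact div_nonneg h1 (mul_nonneg hn hn)
  · rw [abs_div, abs_div]
    exact div_le_div_of_nonneg_right h2 (abs_nonneg _)

theorem pointwise_est (gs a b : ℝ) (G g gbar : ℝ → ℝ) (hG0 : G 0 = 0)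
    (hgbar : ∀ r, gbar r = g r * r)
    (h : ∀ r : ℝ, 0 < r → 0 ≤ gbar r ∧ (1 + gs) * G r ≤ r * gbar r)
    (hm : MonotoneOn gbar (Set.Ioi 0)) (hab : 0 ≤ a * b) (hle : |b| ≤ |a|) :
    0 ≤ g |a| * a * b ∧ (gs + 1) * G |b| ≤ g |a| * a * b := by
  by_cases hb : b = 0
  · subst hb; simp [hG0]
  have hb' : 0 < |b| := abs_pos.mpr hb
  have ha' : 0 < |a| := hb'.trans_le hle
  have e : g |a| * a * b = gbar |a| * |b| := by
    rw [hgbar, mul_assoc, mul_assoc, ← abs_mul, abs_of_nonneg hab]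
  have h1 := hm hb' ha' hle
  have h2 := (h _ hb').2
  rw [e]
  refine ⟨mul_nonneg (h _ ha').1 hb'.le, ?_⟩
  nlinarith [mul_le_mul_of_nonneg_right h1 hb'.le]

/-- Truncation estimate: the integrand
`g(x,y,|δ^s v|) δ^s v δ^s(P_k ∘ v) |x-y|^{-d}` is a.e. nonnegative and
`(g_*+1) Γ_{s,G}(P_k(v)) ≤ ⟨𝓛_g^s v, P_k(v)⟩` as integrals of nonnegative functions. -/
theorem truncation_estimate
    (d : ℕ) (hd : 1 ≤ d) (s : ℝ) (hs0 : 0 < s) (hs1 : s < 1)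
    (gs gS : ℝ) (hgs : 0 < gs) (hgsS : gs ≤ gS)
    (G g gbar : Ed d → Ed d → ℝ → ℝ)
    (hGmeas : Measurable (fun p : Ed d × Ed d × ℝ => G p.1 p.2.1 p.2.2))
    (hgmeas : Measurable (fun p : Ed d × Ed d × ℝ => g p.1 p.2.1 p.2.2))
    (hG0 : ∀ x y : Ed d, G x y 0 = 0)
    (hgbar : ∀ (x y : Ed d) (r : ℝ), gbar x y r = g x y r * r)
    (hGae : ∀ᵐ p : Ed d × Ed d,
      (∀ r : ℝ, 0 < r → HasDerivAt (G p.1 p.2) (gbar p.1 p.2 r) r ∧ 0 ≤ gbar p.1 p.2 r ∧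
        (1 + gs) * G p.1 p.2 r ≤ r * gbar p.1 p.2 r ∧
        r * gbar p.1 p.2 r ≤ (1 + gS) * G p.1 p.2 r) ∧
      MonotoneOn (gbar p.1 p.2) (Set.Ioi 0))
    (v : Ed d → ℝ) (hv : Measurable v) (k : ℝ) (hk : 0 ≤ k) :
    (∀ᵐ p : Ed d × Ed d,
      0 ≤ g p.1 p.2 |deltaS s v p.1 p.2| * deltaS s v p.1 p.2 *
        deltaS s (fun z => Pk k (v z)) p.1 p.2 / ‖p.1 - p.2‖ ^ (d : ℝ)) ∧
    ENNReal.ofReal (gs + 1) *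
      (∫⁻ p : Ed d × Ed d,
        ENNReal.ofReal (G p.1 p.2 |deltaS s (fun z => Pk k (v z)) p.1 p.2| /
          ‖p.1 - p.2‖ ^ (d : ℝ))) ≤
      ∫⁻ p : Ed d × Ed d,
        ENNReal.ofReal (g p.1 p.2 |deltaS s v p.1 p.2| * deltaS s v p.1 p.2 *
          deltaS s (fun z => Pk k (v z)) p.1 p.2 / ‖p.1 - p.2‖ ^ (d : ℝ)) := by
  have H : ∀ᵐ p : Ed d × Ed d,
      0 ≤ g p.1 p.2 |deltaS s v p.1 p.2| * deltaS s v p.1 p.2 *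
        deltaS s (fun z => Pk k (v z)) p.1 p.2 ∧
      (gs + 1) * G p.1 p.2 |deltaS s (fun z => Pk k (v z)) p.1 p.2| ≤
        g p.1 p.2 |deltaS s v p.1 p.2| * deltaS s v p.1 p.2 *
        deltaS s (fun z => Pk k (v z)) p.1 p.2 := by
    filter_upwards [hGae] with p hp
    obtain ⟨h1, h2⟩ := deltaS_Pk s k hk v p.1 p.2
    exact pointwise_est gs _ _ (G p.1 p.2) (g p.1 p.2) (gbar p.1 p.2) (hG0 _ _) (hgbar _ _)
      (fun r hr => ⟨(hp.1 r hr).2.1, (hp.1 r hr).2.2.1⟩) hp.2 h1 h2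
  constructor
  · filter_upwards [H] with p hp
    exact div_nonneg hp.1 (Real.rpow_nonneg (norm_nonneg _) _)
  · rw [← lintegral_const_mul' _ _ ENNReal.ofReal_ne_top]
    apply lintegral_mono_ae
    filter_upwards [H] with p hp
    rw [← ENNReal.ofReal_mul (by linarith), ← mul_div_assoc]
    exact ENNReal.ofReal_le_ofReal
      (div_le_div_of_nonneg_right hp.2 (Real.rpow_nonneg (norm_nonneg _) _))
end

section
/- Let d ≥ 1, 0 < s < 1, 0 < g_* ≤ g^*, 0 < γ_* ≤ γ^*, and let g : ℝ^d × ℝ^d × (0,∞) → (0,∞) be jointly measurable such that for almost every (x,y) the map r ↦ g(x,y,r) is differentiable with g_* ≤ 1 + r ∂_r g(x,y,r)/g(x,y,r) ≤ g^* and γ_* ≤ g(x,y,r) ≤ γ^* for all r > 0; set h(x,y,t) = g(x,y,|t|) t for t ≠ 0 and h(x,y,0) = 0. Then for all measurable u, v : ℝ^d → ℝ the integrand (x,y) ↦ [ h(x,y, δ^s u) − h(x,y, δ^s v) ] · δ^s(u − v) · |x−y|^{−d} is nonnegative a.e., and, as (possibly infinite) integrals of nonnegative functions, ∫_{ℝ^d}∫_{ℝ^d}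 [ h(x,y, δ^s u) − h(x,y, δ^s v) ] δ^s(u − v) |x−y|^{−d} dx dy ≥ γ_* g_* ∫_{ℝ^d}∫_{ℝ^d} |(u−v)(x) − (u−v)(y)|² / |x−y|^{d+2s} dx dy. -/
open MeasureTheory

theorem aux_mono (gs γs γS : ℝ) (hgs : 0 < gs) (hγs : 0 < γs) (g g' : ℝ → ℝ)
    (hg : ∀ r : ℝ, 0 < r → HasDerivAt g (g' r) r ∧ gs ≤ 1 + r * g' r / g r ∧
      γs ≤ g r ∧ g r ≤ γS)
    (h : ℝ → ℝ) (hh : ∀ t : ℝ, t ≠ 0 → h t = g |t| * t) (hh0 : h 0 = 0) :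
    Monotone (fun t => h t - γs * gs * t) := by
  have hder : ∀ x : ℝ, 0 < x →
      HasDerivAt (fun t => h t - γs * gs * t) (g' x * x + g x * 1 - γs * gs * 1) x := by
    intro x hx
    have h1 : HasDerivAt (fun t => g t * t - γs * gs * t)
        (g' x * x + g x * 1 - γs * gs * 1) x :=
      ((hg x hx).1.mul (hasDerivAt_id x)).sub ((hasDerivAt_id x).const_mul (γs * gs))
    refine h1.congr_of_eventuallyEq ?_
    filter_upwards [lt_mem_nhds hx] with t ht
    rw [hh t ht.ne', abs_of_pos ht]
  have hcont0 : ContinuousAt h 0 := by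
    have hb : ∀ t, |h t| ≤ γS * |t| := by
      intro t
      rcases eq_or_ne t 0 with rfl | ht
      · simp [hh0]
      · have ht' := abs_pos.mpr ht
        obtain ⟨-, -, h3, h4⟩ := hg _ ht'
        rw [hh t ht, abs_mul, abs_of_pos (hγs.trans_le h3)]
        gcongr
    have hlim : Filter.Tendsto (fun t : ℝ => γS * |t|) (nhds 0) (nhds 0) := by
      have : Continuous (fun t : ℝ => γS * |t|) := by fun_prop
      simpa using this.tendsto 0
    unfold ContinuousAt
    rw [hh0]
    exact squeeze_zero_norm hb hlim
  have hmon : MonotoneOn (fun t => h t - γs * gs * t) (Set.Ici 0) := by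
    refine monotoneOn_of_hasDerivWithinAt_nonneg (convex_Ici 0)
      (f' := fun x => g' x * x + g x * 1 - γs * gs * 1) ?_ ?_ ?_
    · intro x hx
      apply ContinuousAt.continuousWithinAt
      rcases eq_or_lt_of_le (Set.mem_Ici.mp hx) with rfl | hx
      · exact hcont0.sub (by fun_prop)
      · exact (hder x hx).continuousAt
    · intro x hx
      rw [interior_Ici] at hx
      exact (hder x hx).hasDerivWithinAt
    · intro x hx
      rw [interior_Ici] at hx
      obtain ⟨-, h2, h3, -⟩ := hg x hx
      have hp := hγs.trans_le h3
      have e : g' x * x + g x * 1 = g x * (1 + x * g' x / g x) := by field_simp; ring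
      have : γs * gs ≤ g x * (1 + x * g' x / g x) := by gcongr
      linarith
  have hodd : ∀ t, h (-t) = - h t := by
    intro t
    rcases eq_or_ne t 0 with rfl | ht
    · simp [hh0]
    · rw [hh _ (neg_ne_zero.mpr ht), hh t ht, abs_neg]; ring
  refine monotone_of_odd_of_monotoneOn_nonneg ?_ hmon
  intro t
  simp only [hodd]
  ring

/-- Strict coercivity in the Hilbertian case `0 < γ_* ≤ g ≤ γ^*`: the integrand of
`⟨𝓛_g^s u - 𝓛_g^s v, u - v⟩` is a.e. nonnegative and
`⟨𝓛_g^s u - 𝓛_g^s v, u - v⟩ ≥ γ_* g_* [u - v]²_{s,2}`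
as integrals of nonnegative functions. -/
theorem coercivity_hilbertian
    (d : ℕ) (hd : 1 ≤ d) (s : ℝ) (hs0 : 0 < s) (hs1 : s < 1)
    (gs gS γs γS : ℝ) (hgs : 0 < gs) (hgsS : gs ≤ gS) (hγs : 0 < γs) (hγsS : γs ≤ γS)
    (g g' : Ed d → Ed d → ℝ → ℝ)
    (hgmeas : Measurable (fun p : Ed d × Ed d × ℝ => g p.1 p.2.1 p.2.2))
    (hgae : ∀ᵐ p : Ed d × Ed d, ∀ r : ℝ, 0 < r →
      HasDerivAt (g p.1 p.2) (g' p.1 p.2 r) r ∧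
      gs ≤ 1 + r * g' p.1 p.2 r / g p.1 p.2 r ∧
      1 + r * g' p.1 p.2 r / g p.1 p.2 r ≤ gS ∧
      γs ≤ g p.1 p.2 r ∧ g p.1 p.2 r ≤ γS)
    (h : Ed d → Ed d → ℝ → ℝ)
    (hh : ∀ (x y : Ed d) (t : ℝ), t ≠ 0 → h x y t = g x y |t| * t)
    (hh0 : ∀ x y : Ed d, h x y 0 = 0)
    (u v : Ed d → ℝ) (hu : Measurable u) (hv : Measurable v) :
    (∀ᵐ p : Ed d × Ed d,
      0 ≤ (h p.1 p.2 (deltaS s u p.1 p.2) - h p.1 p.2 (deltaS s v p.1 p.2)) *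
        deltaS s (fun z => u z - v z) p.1 p.2 / ‖p.1 - p.2‖ ^ (d : ℝ)) ∧
    ENNReal.ofReal (γs * gs) *
      (∫⁻ p : Ed d × Ed d,
        ENNReal.ofReal (|(u p.1 - v p.1) - (u p.2 - v p.2)| ^ 2 /
          ‖p.1 - p.2‖ ^ ((d : ℝ) + 2 * s))) ≤
      ∫⁻ p : Ed d × Ed d,
        ENNReal.ofReal ((h p.1 p.2 (deltaS s u p.1 p.2) - h p.1 p.2 (deltaS s v p.1 p.2)) *
          deltaS s (fun z => u z - v z) p.1 p.2 / ‖p.1 - p.2‖ ^ (d : ℝ)) := by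
  have key : ∀ᵐ p : Ed d × Ed d,
      (γs * gs) * (|(u p.1 - v p.1) - (u p.2 - v p.2)| ^ 2 /
          ‖p.1 - p.2‖ ^ ((d : ℝ) + 2 * s)) ≤
      (h p.1 p.2 (deltaS s u p.1 p.2) - h p.1 p.2 (deltaS s v p.1 p.2)) *
        deltaS s (fun z => u z - v z) p.1 p.2 / ‖p.1 - p.2‖ ^ (d : ℝ) := by
    filter_upwards [hgae] with p hp
    have hm := aux_mono gs γs γS hgs hγs (g p.1 p.2) (g' p.1 p.2)
      (fun r hr => ⟨(hp r hr).1, (hp r hr).2.1, (hp r hr).2.2.2⟩) (h p.1 p.2)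
      (hh p.1 p.2) (hh0 p.1 p.2)
    have hab : ∀ a b : ℝ, γs * gs * (a - b) ^ 2 ≤ (h p.1 p.2 a - h p.1 p.2 b) * (a - b) := by
      intro a b
      rcases le_total a b with hl | hl
      · have := hm hl
        simp only at this
        nlinarith [mul_nonneg (sub_nonneg.mpr this) (sub_nonneg.mpr hl)]
      · have := hm hl
        simp only at this
        nlinarith [mul_nonneg (sub_nonneg.mpr this) (sub_nonneg.mpr hl)]
    have hsub : deltaS s (fun z => u z - v z) p.1 p.2
        = deltaS s u p.1 p.2 - deltaS s v p.1 p.2 := by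
      unfold deltaS; ring
    rcases eq_or_ne p.1 p.2 with he | hne
    · simp [he, deltaS]
    · have hn : 0 < ‖p.1 - p.2‖ := norm_pos_iff.mpr (sub_ne_zero.mpr hne)
      have e : (γs * gs) * (|(u p.1 - v p.1) - (u p.2 - v p.2)| ^ 2 /
          ‖p.1 - p.2‖ ^ ((d : ℝ) + 2 * s)) =
          γs * gs * (deltaS s u p.1 p.2 - deltaS s v p.1 p.2) ^ 2 / ‖p.1 - p.2‖ ^ (d : ℝ) := by
        rw [← hsub, sq_abs, two_mul, Real.rpow_add hn, Real.rpow_add hn]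
        unfold deltaS
        have h1 := Real.rpow_pos_of_pos hn s
        have h2 := Real.rpow_pos_of_pos hn (d : ℝ)
        generalize ‖p.1 - p.2‖ ^ s = A at *
        generalize ‖p.1 - p.2‖ ^ (d : ℝ) = B at *
        field_simp
      rw [e, hsub]
      exact div_le_div_of_nonneg_right (hab _ _) (by positivity)
  refine ⟨?_, ?_⟩
  · filter_upwards [key] with p hp
    exact le_trans (by positivity) hp
  · rw [← lintegral_const_mul' _ _ ENNReal.ofReal_ne_top]
    refine lintegral_mono_ae ?_
    filter_upwards [key] with p hp
    rw [← ENNReal.ofReal_mul (by positivity)]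
    exact ENNReal.ofReal_le_ofReal hp
end

section
/- Let d ≥ 1, 0 < s < 1, 0 < g_* ≤ g^*, 0 < γ_* ≤ γ^*, and let g : ℝ^d × ℝ^d × (0,∞) → (0,∞) be jointly measurable such that for almost every (x,y) the map r ↦ g(x,y,r) is differentiable with g_* ≤ 1 + r ∂_r g(x,y,r)/g(x,y,r) ≤ g^* and γ_* ≤ g(x,y,r) ≤ γ^* for all r > 0; set h(x,y,t) = g(x,y,|t|) t for t ≠ 0 and h(x,y,0) = 0. Let u, v, w : ℝ^d → ℝ be measurable with finite Gagliardo H^s seminorms [u − v]_{s,2} < ∞ and [w]_{s,2} < ∞. Then the function (x,y) ↦ [ h(x,y, δ^s u) − h(x,y, δ^s v) ] · δ^s w · |x−y|^{−d} is integrable on ℝ^d × ℝ^d and | ∫_{ℝ^d}∫_{ℝ^d} [ h(x,y, δ^s u) − h(x,y, δ^s v) ] δ^s w |x−y|^{−d} dx dy | ≤ γ^* g^* [u − v]_{s,2} [w]_{s,2}. -/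
open MeasureTheory

/-- The square of the Gagliardo `H^s` seminorm, as a value in `[0,∞]`. -/
noncomputable def gagliardoSq (d : ℕ) (s : ℝ) (w : Ed d → ℝ) : ENNReal :=
  ∫⁻ p : Ed d × Ed d, ENNReal.ofReal (|w p.1 - w p.2| ^ 2 / ‖p.1 - p.2‖ ^ ((d : ℝ) + 2 * s))

lemma aux_lip (gs gS γs γS : ℝ) (hgs : 0 < gs) (hγs : 0 < γs) (f f' : ℝ → ℝ)
    (H : ∀ r : ℝ, 0 < r → HasDerivAt f (f' r) r ∧ gs ≤ 1 + r * f' r / f r ∧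
      1 + r * f' r / f r ≤ gS ∧ γs ≤ f r ∧ f r ≤ γS) (a b : ℝ) :
    |f |a| * a - f |b| * b| ≤ γS * gS * |a - b| := by
  have L1 : ∀ a b : ℝ, 0 < a → 0 < b → |f a * a - f b * b| ≤ γS * gS * |a - b| := by
    intro a b ha hb
    have := Convex.norm_image_sub_le_of_norm_hasDerivWithin_le (𝕜 := ℝ) (f := fun r => f r * r)
      (f' := fun r => f' r * r + f r * 1) (s := Set.Ioi 0) (C := γS * gS) (x := b) (y := a)
      (fun x hx => ((H x hx).1.mul (hasDerivAt_id x)).hasDerivWithinAt) ?_ (convex_Ioi 0) hb ha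
    · simpa [Real.norm_eq_abs] using this
    · intro x hx
      obtain ⟨-, h1, h2, h3, h4⟩ := H x hx
      have hf : 0 < f x := by linarith
      have e : f' x * x + f x * 1 = f x * (1 + x * f' x / f x) := by field_simp; ring
      rw [e, Real.norm_eq_abs, abs_mul, abs_of_pos hf, abs_of_pos (by linarith)]
      exact mul_le_mul h4 h2 (by linarith) (by linarith)
  have hK : 0 ≤ γS * gS := by
    obtain ⟨-, h1, h2, h3, h4⟩ := H 1 one_pos
    exact mul_nonneg (by linarith) (by linarith)
  have hγS : 0 < γS := by
    obtain ⟨-, h1, h2, h3, h4⟩ := H 1 one_pos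
    linarith
  have L2 : ∀ a : ℝ, 0 < a → |f a * a| ≤ γS * gS * a := by
    intro a ha
    refine le_of_forall_pos_le_add fun ε hε => ?_
    set e := min a (ε / γS) with he
    have he0 : 0 < e := lt_min ha (by positivity)
    have h1 := L1 a e ha he0
    have hea : e ≤ a := min_le_left _ _
    have hee : γS * e ≤ ε := by
      have : e ≤ ε / γS := min_le_right _ _
      rw [le_div_iff₀ hγS] at this
      linarith
    rw [abs_of_nonneg (by linarith : 0 ≤ a - e)] at h1
    obtain ⟨-, -, -, h3, h4⟩ := H e he0
    have h5 : |f e * e| ≤ γS * e := by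
      rw [abs_of_pos (mul_pos (by linarith) he0)]
      exact mul_le_mul_of_nonneg_right h4 he0.le
    have h6 : |f a * a| ≤ |f a * a - f e * e| + |f e * e| := by
      simpa using abs_add_le (f a * a - f e * e) (f e * e)
    nlinarith [mul_nonneg hK he0.le]
  have L3 : ∀ a : ℝ, |f |a| * a| ≤ γS * gS * |a| := by
    intro a
    by_cases h : a = 0
    · simp [h]
    · have := L2 |a| (abs_pos.2 h)
      rwa [abs_mul, abs_abs, ← abs_mul] at this
  have L4 : ∀ a b : ℝ, 0 ≤ a → b ≤ 0 → |f |a| * a - f |b| * b| ≤ γS * gS * |a - b| := by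
    intro a b ha hb
    have h1 := L3 a
    have h2 := L3 b
    rw [abs_of_nonneg (by linarith : 0 ≤ a - b)]
    have := abs_sub (f |a| * a) (f |b| * b)
    have e1 : |a| = a := abs_of_nonneg ha
    have e2 : |b| = -b := abs_of_nonpos hb
    have h1' : γS * gS * |a| = γS * gS * a := by rw [e1]
    have h2' : γS * gS * |b| = γS * gS * (-b) := by rw [e2]
    linarith
  rcases lt_or_ge 0 a with ha | ha <;> rcases lt_or_ge 0 b with hb | hb
  · rw [abs_of_pos ha, abs_of_pos hb]; exact L1 a b ha hb
  · exact L4 a b ha.le hb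
  · have := L4 b a hb.le ha
    rwa [abs_sub_comm, abs_sub_comm b a] at this
  · rcases ha.lt_or_eq with ha | ha
    · rcases hb.lt_or_eq with hb | hb
      · have := L1 (-a) (-b) (by linarith) (by linarith)
        rw [abs_of_neg ha, abs_of_neg hb]
        rw [show f (-a) * a - f (-b) * b = -(f (-a) * -a - f (-b) * -b) by ring, abs_neg,
          show a - b = -(-a - -b) by ring, abs_neg]
        exact this
      · simpa [hb] using L3 a
    · simpa [ha] using L3 b

/-- square root of the Gagliardo density -/
noncomputable def auxA (d : ℕ) (s : ℝ) (w : Ed d → ℝ) (p : Ed d × Ed d) : ℝ :=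
  |deltaS s w p.1 p.2| / ‖p.1 - p.2‖ ^ ((d : ℝ) / 2)

lemma auxA_nonneg (d : ℕ) (s : ℝ) (w : Ed d → ℝ) (p : Ed d × Ed d) : 0 ≤ auxA d s w p := by
  unfold auxA; positivity

lemma auxA_sq (d : ℕ) (s : ℝ) (hs : 0 < s) (w : Ed d → ℝ) (p : Ed d × Ed d) :
    auxA d s w p ^ 2 = |w p.1 - w p.2| ^ 2 / ‖p.1 - p.2‖ ^ ((d : ℝ) + 2 * s) := by
  have h0 := norm_nonneg (p.1 - p.2)
  unfold auxA deltaS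
  rw [Real.rpow_add_of_nonneg h0 (by positivity) (by positivity), abs_div,
    abs_of_nonneg (Real.rpow_nonneg h0 s), div_pow, div_pow, ← Real.rpow_mul_natCast h0,
    ← Real.rpow_mul_natCast h0, div_div]
  congr 1
  rw [mul_comm]
  congr 2 <;> push_cast <;> ring

lemma deltaS_meas (d : ℕ) (s : ℝ) (w : Ed d → ℝ) (hw : Measurable w) :
    Measurable (fun p : Ed d × Ed d => deltaS s w p.1 p.2) := by
  unfold deltaS
  fun_prop

lemma auxA_meas (d : ℕ) (s : ℝ) (w : Ed d → ℝ) (hw : Measurable w) :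
    Measurable (auxA d s w) := by
  have := deltaS_meas d s w hw
  have h2 : Measurable (fun p : Ed d × Ed d => |deltaS s w p.1 p.2|) := this.norm
  unfold auxA
  fun_prop

lemma auxA_int (d : ℕ) (s : ℝ) (hs : 0 < s) (w : Ed d → ℝ) (hw : Measurable w)
    (hfin : gagliardoSq d s w ≠ ⊤) :
    MemLp (auxA d s w) 2 volume ∧ ∫ p, auxA d s w p ^ 2 = (gagliardoSq d s w).toReal := by
  have hm := auxA_meas d s w hw
  have e : gagliardoSq d s w = ∫⁻ p, ENNReal.ofReal (auxA d s w p ^ 2) := by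
    unfold gagliardoSq
    simp only [auxA_sq d s hs w]
  constructor
  · rw [memLp_two_iff_integrable_sq hm.aestronglyMeasurable]
    refine ⟨(hm.pow_const 2).aestronglyMeasurable, ?_⟩
    rw [hasFiniteIntegral_iff_ofReal (Filter.Eventually.of_forall fun p => sq_nonneg _), ← e]
    exact hfin.lt_top
  · rw [integral_eq_lintegral_of_nonneg_ae (Filter.Eventually.of_forall fun p => sq_nonneg _)
      (hm.pow_const 2).aestronglyMeasurable, e]

/-- Lipschitz continuity in the Hilbertian case `0 < γ_* ≤ g ≤ γ^*`: if
`[u - v]_{s,2} < ∞` and `[w]_{s,2} < ∞`, then the integrand of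
`⟨𝓛_g^s u - 𝓛_g^s v, w⟩` is integrable on `ℝ^d × ℝ^d` and
`|⟨𝓛_g^s u - 𝓛_g^s v, w⟩| ≤ γ^* g^* [u - v]_{s,2} [w]_{s,2}`. -/
theorem lipschitz_hilbertian
    (d : ℕ) (hd : 1 ≤ d) (s : ℝ) (hs0 : 0 < s) (hs1 : s < 1)
    (gs gS γs γS : ℝ) (hgs : 0 < gs) (hgsS : gs ≤ gS) (hγs : 0 < γs) (hγsS : γs ≤ γS)
    (g g' : Ed d → Ed d → ℝ → ℝ)
    (hgmeas : Measurable (fun p : Ed d × Ed d × ℝ => g p.1 p.2.1 p.2.2))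
    (hgae : ∀ᵐ p : Ed d × Ed d, ∀ r : ℝ, 0 < r →
      HasDerivAt (g p.1 p.2) (g' p.1 p.2 r) r ∧
      gs ≤ 1 + r * g' p.1 p.2 r / g p.1 p.2 r ∧
      1 + r * g' p.1 p.2 r / g p.1 p.2 r ≤ gS ∧
      γs ≤ g p.1 p.2 r ∧ g p.1 p.2 r ≤ γS)
    (h : Ed d → Ed d → ℝ → ℝ)
    (hh : ∀ (x y : Ed d) (t : ℝ), t ≠ 0 → h x y t = g x y |t| * t)
    (hh0 : ∀ x y : Ed d, h x y 0 = 0)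
    (u v w : Ed d → ℝ) (hu : Measurable u) (hv : Measurable v) (hw : Measurable w)
    (hfin1 : gagliardoSq d s (fun z => u z - v z) ≠ ⊤)
    (hfin2 : gagliardoSq d s w ≠ ⊤) :
    Integrable (fun p : Ed d × Ed d =>
      (h p.1 p.2 (deltaS s u p.1 p.2) - h p.1 p.2 (deltaS s v p.1 p.2)) *
        deltaS s w p.1 p.2 / ‖p.1 - p.2‖ ^ (d : ℝ)) volume ∧
    |∫ p : Ed d × Ed d,
        (h p.1 p.2 (deltaS s u p.1 p.2) - h p.1 p.2 (deltaS s v p.1 p.2)) *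
          deltaS s w p.1 p.2 / ‖p.1 - p.2‖ ^ (d : ℝ)| ≤
      γS * gS * ((gagliardoSq d s (fun z => u z - v z)).toReal ^ ((1:ℝ)/2)) *
        ((gagliardoSq d s w).toReal ^ ((1:ℝ)/2)) := by
  have hA := auxA_int d s hs0 (fun z => u z - v z) (hu.sub hv) hfin1
  have hB := auxA_int d s hs0 w hw hfin2
  set A := auxA d s (fun z => u z - v z) with hAdef
  set B := auxA d s w with hBdef
  have hh' : ∀ (x y : Ed d) (t : ℝ), h x y t = g x y |t| * t := by
    intro x y t
    by_cases ht : t = 0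
    · simp [ht, hh0]
    · exact hh x y t ht
  have hAB : Integrable (fun p => A p * B p) volume := hA.1.integrable_mul hB.1
  have hABC : Integrable (fun p => γS * gS * (A p * B p)) volume := hAB.const_mul _
  have hcomp : ∀ f : Ed d → ℝ, Measurable f → Measurable (fun p : Ed d × Ed d =>
      h p.1 p.2 (deltaS s f p.1 p.2)) := by
    intro f hf
    have h1 := deltaS_meas d s f hf
    have h2 : Measurable (fun p : Ed d × Ed d => |deltaS s f p.1 p.2|) := h1.norm
    simp only [hh']
    exact (hgmeas.comp (measurable_fst.prodMk (measurable_snd.prodMk h2))).mul h1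
  have hmeas : Measurable (fun p : Ed d × Ed d =>
      (h p.1 p.2 (deltaS s u p.1 p.2) - h p.1 p.2 (deltaS s v p.1 p.2)) *
        deltaS s w p.1 p.2 / ‖p.1 - p.2‖ ^ (d : ℝ)) := by
    have h1 := hcomp u hu
    have h2 := hcomp v hv
    have h3 := deltaS_meas d s w hw
    exact ((h1.sub h2).mul h3).div (by fun_prop)
  have hbd : ∀ᵐ p : Ed d × Ed d, ‖(h p.1 p.2 (deltaS s u p.1 p.2) -
      h p.1 p.2 (deltaS s v p.1 p.2)) * deltaS s w p.1 p.2 / ‖p.1 - p.2‖ ^ (d : ℝ)‖ ≤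
      γS * gS * (A p * B p) := by
    filter_upwards [hgae] with p hp
    have h1 := aux_lip gs gS γs γS hgs hγs (g p.1 p.2) (g' p.1 p.2) hp
      (deltaS s u p.1 p.2) (deltaS s v p.1 p.2)
    have h0 := norm_nonneg (p.1 - p.2)
    have e1 : deltaS s u p.1 p.2 - deltaS s v p.1 p.2 =
        deltaS s (fun z => u z - v z) p.1 p.2 := by
      unfold deltaS; ring
    have e2 : ‖p.1 - p.2‖ ^ (d : ℝ) =
        ‖p.1 - p.2‖ ^ ((d : ℝ) / 2) * ‖p.1 - p.2‖ ^ ((d : ℝ) / 2) := by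
      rw [← Real.rpow_add_of_nonneg h0 (by positivity) (by positivity), add_halves]
    rw [hh', hh', Real.norm_eq_abs, abs_div, abs_mul, abs_of_nonneg (Real.rpow_nonneg h0 _)]
    rw [e1] at h1
    calc _ ≤ γS * gS * |deltaS s (fun z => u z - v z) p.1 p.2| * |deltaS s w p.1 p.2| /
          ‖p.1 - p.2‖ ^ (d : ℝ) := by gcongr
      _ = _ := by
        rw [e2, hAdef, hBdef]; unfold auxA
        rw [div_mul_div_comm, mul_assoc, mul_div_assoc]
  refine ⟨hABC.mono' hmeas.aestronglyMeasurable hbd, ?_⟩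
  have hK : 0 ≤ γS * gS := mul_nonneg (by linarith) (by linarith)
  have hH := integral_mul_le_Lp_mul_Lq_of_nonneg (μ := (volume : Measure (Ed d × Ed d)))
    Real.HolderConjugate.two_two
    (Filter.Eventually.of_forall (auxA_nonneg d s (fun z => u z - v z)))
    (Filter.Eventually.of_forall (auxA_nonneg d s w)) (by simpa using hA.1) (by simpa using hB.1)
  simp only [Real.rpow_two] at hH
  rw [← hAdef, ← hBdef, hA.2, hB.2] at hH
  have h2 := norm_integral_le_of_norm_le hABC hbd
  rw [integral_const_mul, Real.norm_eq_abs] at h2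
  refine h2.trans ?_
  rw [mul_assoc (γS * gS)]
  exact mul_le_mul_of_nonneg_left hH hK
end

section
/- Let d ≥ 1, 0 < s < 1, p ≥ 2, and let K : ℝ^d × ℝ^d → ℝ be measurable with 0 < k_* ≤ K(x,y) ≤ k^* for a.e. (x,y). Then for all measurable u, v : ℝ^d → ℝ the integrand (x,y) ↦ K(x,y) ( |δ^s u|^{p−2} δ^s u − |δ^s v|^{p−2} δ^s v ) (δ^s u − δ^s v) |x−y|^{−d} is nonnegative a.e., and, as (possibly infinite) integrals of nonnegative functions, ∫_{ℝ^d}∫_{ℝ^d} K(x,y) ( |δ^s u|^{p−2} δ^s u − |δ^s v|^{p−2} δ^s v ) (δ^s u − δ^s v) |x−y|^{−d} dx dy ≥ 2^{1−p} k_* ∫_{ℝ^d}∫_{ℝ^d} |(u−v)(x) − (u−v)(y)|^p / |x−y|^{d+sp} dx dy. -/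
open MeasureTheory

theorem scalar_aux (p : ℝ) (hp : 2 ≤ p) (a b : ℝ) :
    (2 : ℝ) ^ (1 - p) * |a - b| ^ p ≤
      (|a| ^ (p - 2) * a - |b| ^ (p - 2) * b) * (a - b) := by
  have hq : 0 ≤ p - 2 := by linarith
  have hA : 0 ≤ |a| ^ (p - 2) := Real.rpow_nonneg (abs_nonneg a) _
  have hB : 0 ≤ |b| ^ (p - 2) := Real.rpow_nonneg (abs_nonneg b) _
  have h1 : 0 ≤ (|a| ^ (p - 2) - |b| ^ (p - 2)) * (a ^ 2 - b ^ 2) := by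
    rcases le_total |a| |b| with h | h
    · have h2 := Real.rpow_le_rpow (abs_nonneg a) h hq
      have h3 := sq_le_sq.mpr h
      exact mul_nonneg_of_nonpos_of_nonpos (by linarith) (by linarith)
    · have h2 := Real.rpow_le_rpow (abs_nonneg b) h hq
      have h3 := sq_le_sq.mpr h
      exact mul_nonneg (by linarith) (by linarith)
  have h2 : |a - b| ^ (p - 2) ≤ 2 ^ (p - 2) * (|a| ^ (p - 2) + |b| ^ (p - 2)) := by
    have ht : |a - b| ≤ |a| + |b| := abs_sub a b
    have h0 : (0 : ℝ) ≤ 2 ^ (p - 2) := by positivity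
    rcases le_total |a| |b| with h | h
    · have := Real.rpow_le_rpow (abs_nonneg _) (show |a - b| ≤ 2 * |b| by linarith) hq
      rw [Real.mul_rpow (by norm_num) (abs_nonneg _)] at this
      nlinarith [mul_nonneg h0 hA]
    · have := Real.rpow_le_rpow (abs_nonneg _) (show |a - b| ≤ 2 * |a| by linarith) hq
      rw [Real.mul_rpow (by norm_num) (abs_nonneg _)] at this
      nlinarith [mul_nonneg h0 hB]
  have h3 : |a - b| ^ p = |a - b| ^ (p - 2) * (a - b) ^ 2 := by
    rw [← sq_abs (a - b), ← Real.rpow_natCast, ← Real.rpow_add_of_nonneg (abs_nonneg _) hq (by norm_num)]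
    congr 1; push_cast; ring
  have h4 : (2 : ℝ) ^ (1 - p) * 2 ^ (p - 2) = 1 / 2 := by
    rw [← Real.rpow_add (by norm_num), show 1 - p + (p - 2) = -1 by ring, Real.rpow_neg_one]
    norm_num
  calc (2 : ℝ) ^ (1 - p) * |a - b| ^ p
      = 2 ^ (1 - p) * |a - b| ^ (p - 2) * (a - b) ^ 2 := by rw [h3]; ring
    _ ≤ 2 ^ (1 - p) * (2 ^ (p - 2) * (|a| ^ (p - 2) + |b| ^ (p - 2))) * (a - b) ^ 2 := by
        gcongr
    _ = 1 / 2 * (|a| ^ (p - 2) + |b| ^ (p - 2)) * (a - b) ^ 2 := by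
        rw [← mul_assoc, h4]
    _ ≤ _ := by nlinarith

/-- Coercivity of the anisotropic fractional p-Laplacian for `p ≥ 2`: the integrand of
`⟨𝓛_p^s u - 𝓛_p^s v, u - v⟩` is a.e. nonnegative and
`⟨𝓛_p^s u - 𝓛_p^s v, u - v⟩ ≥ 2^{1-p} k_* [u - v]^p_{s,p}`
as integrals of nonnegative functions. -/
theorem pLaplacian_coercivity_degenerate
    (d : ℕ) (hd : 1 ≤ d) (s : ℝ) (hs0 : 0 < s) (hs1 : s < 1)
    (p : ℝ) (hp : 2 ≤ p) (ks kS : ℝ) (hks : 0 < ks) (hksS : ks ≤ kS)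
    (K : Ed d → Ed d → ℝ)
    (hKmeas : Measurable (fun q : Ed d × Ed d => K q.1 q.2))
    (hKbdd : ∀ᵐ q : Ed d × Ed d, ks ≤ K q.1 q.2 ∧ K q.1 q.2 ≤ kS)
    (u v : Ed d → ℝ) (hu : Measurable u) (hv : Measurable v) :
    (∀ᵐ q : Ed d × Ed d,
      0 ≤ K q.1 q.2 *
        ((|deltaS s u q.1 q.2| ^ (p - 2) * deltaS s u q.1 q.2 -
          |deltaS s v q.1 q.2| ^ (p - 2) * deltaS s v q.1 q.2) *
          (deltaS s u q.1 q.2 - deltaS s v q.1 q.2)) / ‖q.1 - q.2‖ ^ (d : ℝ)) ∧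
    ENNReal.ofReal ((2 : ℝ) ^ (1 - p) * ks) *
      (∫⁻ q : Ed d × Ed d,
        ENNReal.ofReal (|(u q.1 - v q.1) - (u q.2 - v q.2)| ^ p /
          ‖q.1 - q.2‖ ^ ((d : ℝ) + s * p))) ≤
      ∫⁻ q : Ed d × Ed d,
        ENNReal.ofReal (K q.1 q.2 *
          ((|deltaS s u q.1 q.2| ^ (p - 2) * deltaS s u q.1 q.2 -
            |deltaS s v q.1 q.2| ^ (p - 2) * deltaS s v q.1 q.2) *
            (deltaS s u q.1 q.2 - deltaS s v q.1 q.2)) / ‖q.1 - q.2‖ ^ (d : ℝ)) := by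
  constructor
  · filter_upwards [hKbdd] with q hq
    have h := scalar_aux p hp (deltaS s u q.1 q.2) (deltaS s v q.1 q.2)
    refine div_nonneg (mul_nonneg (hks.le.trans hq.1) (le_trans (by positivity) h)) (by positivity)
  · rw [← lintegral_const_mul' _ _ ENNReal.ofReal_ne_top]
    apply lintegral_mono_ae
    filter_upwards [hKbdd] with q hq
    rw [← ENNReal.ofReal_mul (by positivity)]
    apply ENNReal.ofReal_le_ofReal
    have h := scalar_aux p hp (deltaS s u q.1 q.2) (deltaS s v q.1 q.2)
    have hE : |(u q.1 - v q.1) - (u q.2 - v q.2)| ^ p / ‖q.1 - q.2‖ ^ ((d : ℝ) + s * p)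
        = |deltaS s u q.1 q.2 - deltaS s v q.1 q.2| ^ p / ‖q.1 - q.2‖ ^ (d : ℝ) := by
      have hr := norm_nonneg (q.1 - q.2)
      unfold deltaS
      rw [← sub_div, abs_div, abs_of_nonneg (Real.rpow_nonneg hr s),
        Real.div_rpow (abs_nonneg _) (Real.rpow_nonneg hr s), ← Real.rpow_mul hr, div_div,
        Real.rpow_add_of_nonneg hr (by positivity) (by positivity), mul_comm (_ ^ (d : ℝ))]
      congr 3
      ring
    rw [hE, ← mul_div_assoc]
    refine div_le_div_of_nonneg_right ?_ (by positivity)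
    calc _ = ks * ((2 : ℝ) ^ (1 - p) * |deltaS s u q.1 q.2 - deltaS s v q.1 q.2| ^ p) := by ring
      _ ≤ _ := mul_le_mul hq.1 h (by positivity) (hks.le.trans hq.1)
end
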